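/- Let G be a finite simple graph and let x ∈ V(G). If d_G(x) ≤ gcol(G − x), where d_G(x) is the degree of x in G, then gcol(G) ≤ gcol(G − x) + 1. -/

import Mathlib

open scoped Classical

/-- The number of backneighbors of `v` with respect to the ordering `τ`:
neighbors of `v` in `G` that appear (strictly) before `v` in `τ`. -/
noncomputable def backDeg {V : Type*} [Fintype V] (G : SimpleGraph V)
    (τ : List V) (v : V) : ℕ :=
  (Finset.univ.filter (fun u =>
    G.Adj v u ∧ ∃ i j : Fin τ.length, i < j ∧ τ.get i = u ∧ τ.get j = v)).card

/-- `col(G, τ)`: the maximum over all vertices `v` of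
`1 +` (the number of backneighbors of `v` with respect to `τ`). -/
noncomputable def colOrd {V : Type*} [Fintype V] (G : SimpleGraph V)
    (τ : List V) : ℕ :=
  Finset.univ.sup (fun v => 1 + backDeg G τ v)

/-- The minimax value of the ordering game on `G` continued from the position
(partial ordering) `σ`, where `alice = true` means it is Alice's turn to choose
an unchosen vertex (Alice minimizes the final score `colOrd G τ`, Bob
maximizes it).  This value is the least `s` such that the player-to-move's
opponent-robust guarantee holds, i.e. the least `s` such that Alice has a
strategy from this position guaranteeing a score of at most `s`. -/
noncomputable def gameVal {V : Type*} [Fintype V] (G : SimpleGraph V)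
    (alice : Bool) (σ : List V) : ℕ :=
  if h : (Finset.univ.filter (fun v : V => v ∉ σ)).Nonempty then
    if alice then
      (Finset.univ.filter (fun v : V => v ∉ σ)).attach.inf'
        (Finset.attach_nonempty_iff.mpr h)
        (fun v => gameVal G false (σ ++ [v.1]))
    else
      (Finset.univ.filter (fun v : V => v ∉ σ)).attach.sup'
        (Finset.attach_nonempty_iff.mpr h)
        (fun v => gameVal G true (σ ++ [v.1]))
  else colOrd G σ
termination_by (Finset.univ.filter (fun v : V => v ∉ σ)).card
decreasing_by
  all_goals {
    have hv : ↑v ∉ σ := (Finset.mem_filter.mp v.2).2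
    apply Finset.card_lt_card
    constructor
    · intro u hu
      simp only [Finset.mem_filter, List.mem_append] at hu ⊢
      exact ⟨hu.1, fun h' => hu.2 (Or.inl h')⟩
    · intro hsub
      have := hsub (Finset.mem_filter.mpr ⟨Finset.mem_univ _, hv⟩)
      simp at this }

/-- The game coloring number of `G`: the value of the ordering game on `G`
with Alice moving first (also written `gcol_A`). -/
noncomputable def gcol {V : Type*} [Fintype V] (G : SimpleGraph V) : ℕ :=
  gameVal G true []

/-- The value of the Bob ordering game on `G` (Bob moves first). -/
noncomputable def gcolB {V : Type*} [Fintype V] (G : SimpleGraph V) : ℕ :=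
  gameVal G false []

/-- The `σ`-game coloring number of `G`: the value of the `σ`-preordered
ordering game, in which Alice moves first if `|σ|` is even and Bob moves
first if `|σ|` is odd. -/
noncomputable def sigmaGcol {V : Type*} [Fintype V] (G : SimpleGraph V)
    (σ : List V) : ℕ :=
  if Even σ.length then gameVal G true σ else gameVal G false σ

/-- The Alice `σ`-game coloring number: the value of the `σ`-preordered game
in which Alice moves first. -/
noncomputable def sigmaGcolA {V : Type*} [Fintype V] (G : SimpleGraph V)
    (σ : List V) : ℕ :=
  gameVal G true σ

/-- The Bob `σ`-game coloring number: the value of the `σ`-preordered game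
in which Bob moves first. -/
noncomputable def sigmaGcolB {V : Type*} [Fintype V] (G : SimpleGraph V)
    (σ : List V) : ℕ :=
  gameVal G false σ

section helpers

noncomputable def bdeg {V : Type*} [Fintype V] (G : SimpleGraph V) (X : Finset V) (v : V) : ℕ :=
  (Finset.univ.filter (fun u => G.Adj v u ∧ u ∈ X)).card

/-- Alice can keep all later scores at most `s`; the first argument counts remaining moves. -/
def WinG {V : Type*} [Fintype V] (G : SimpleGraph V) (s : ℕ) : ℕ → Bool → Finset V → Prop
  | 0, _, _ => True
  | n + 1, true, X => ∃ v, v ∉ X ∧ bdeg G X v < s ∧ WinG G s n false (insert v X)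
  | n + 1, false, X => ∀ v, v ∉ X → bdeg G X v < s ∧ WinG G s n true (insert v X)

variable {V : Type*} [Fintype V] (G : SimpleGraph V)

lemma bdeg_mono {X Y : Finset V} (h : X ⊆ Y) (v : V) : bdeg G X v ≤ bdeg G Y v := by
  apply Finset.card_le_card
  intro u hu
  simp only [Finset.mem_filter] at hu ⊢
  exact ⟨hu.1, hu.2.1, h hu.2.2⟩

lemma card_compl_insert' {X : Finset V} {v : V} {n : ℕ} (h : Xᶜ.card = n + 1) (hv : v ∉ X) :
    (insert v X)ᶜ.card = n := by
  rw [Finset.card_compl] at *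
  rw [Finset.card_insert_of_notMem hv]
  omega

lemma exists_notMem' {X : Finset V} {n : ℕ} (h : Xᶜ.card = n + 1) : ∃ v, v ∉ X := by
  have : Xᶜ.Nonempty := by rw [← Finset.card_pos]; omega
  obtain ⟨v, hv⟩ := this
  exact ⟨v, by simpa using hv⟩

lemma safe_exists (s : ℕ) (n : ℕ) : ∀ (a : Bool) (X : Finset V), Xᶜ.card = n + 1 →
    WinG G s (n + 1) a X → ∃ z, z ∉ X ∧ bdeg G Finset.univ z < s := by
  induction n with
  | zero =>
    intro a X hX hW
    have key : ∀ v, v ∉ X → bdeg G X v < s → bdeg G Finset.univ v < s := by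
      intro v hv hb
      refine lt_of_le_of_lt ?_ hb
      apply Finset.card_le_card
      intro u hu
      simp only [Finset.mem_filter, Finset.mem_univ, true_and, and_true] at hu ⊢
      refine ⟨hu, ?_⟩
      have h0 := card_compl_insert' hX hv
      rw [Finset.card_eq_zero, Finset.compl_eq_empty_iff] at h0
      have : u ∈ insert v X := by rw [h0]; exact Finset.mem_univ _
      rcases Finset.mem_insert.mp this with h | h
      · exact absurd (h ▸ hu) (by simp)
      · exact h
    cases a with
    | true =>
      obtain ⟨v, hv, hb, _⟩ := hW
      exact ⟨v, hv, key v hv hb⟩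
    | false =>
      obtain ⟨v, hv⟩ := exists_notMem' hX
      exact ⟨v, hv, key v hv (hW v hv).1⟩
  | succ n ih =>
    intro a X hX hW
    have : ∃ v b, v ∉ X ∧ WinG G s (n + 1) b (insert v X) := by
      cases a with
      | true =>
        obtain ⟨v, hv, hb, h⟩ := hW
        exact ⟨v, _, hv, h⟩
      | false =>
        obtain ⟨v, hv⟩ := exists_notMem' hX
        exact ⟨v, _, hv, (hW v hv).2⟩
    obtain ⟨v, b, hv, h⟩ := this
    obtain ⟨z, hz, hb⟩ := ih b _ (card_compl_insert' hX hv) h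
    exact ⟨z, fun hh => hz (Finset.mem_insert_of_mem hh), hb⟩

lemma safe_drop (s : ℕ) (n : ℕ)
    (T : ∀ k ≤ n, ∀ X : Finset V, Xᶜ.card = k → WinG G s k false X → WinG G s k true X)
    (z : V) (hs : bdeg G Finset.univ z < s) :
    ∀ Y : Finset V, z ∉ Y → Yᶜ.card = n + 1 → WinG G s n false (insert z Y) →
      WinG G s (n + 1) false Y := by
  induction n using Nat.strong_induction_on with
  | _ n ih =>
    intro Y hz hY hW w hw
    by_cases hwz : w = z
    · subst hwz
      exact ⟨lt_of_le_of_lt (bdeg_mono G (Finset.subset_univ _) _) hs,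
        T n le_rfl _ (card_compl_insert' hY hz) hW⟩
    have hzw : z ∉ insert w Y := by
      simp only [Finset.mem_insert, not_or]; exact ⟨fun h => hwz h.symm, hz⟩
    have hwz' : w ∉ insert z Y := by
      simp only [Finset.mem_insert, not_or]; exact ⟨hwz, hw⟩
    have hc := card_compl_insert' hY hz
    match n, ih, T, hY, hW, hc with
    | 0, _, _, _, _, hc =>
      rw [Finset.card_eq_zero, Finset.compl_eq_empty_iff] at hc
      exact absurd (Finset.mem_univ w) (hc ▸ hwz')
    | 1, _, _, _, hW, _ =>
      refine ⟨lt_of_le_of_lt (bdeg_mono G (Finset.subset_insert _ _) _) (hW w hwz').1, ?_⟩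
      exact ⟨z, hzw, lt_of_le_of_lt (bdeg_mono G (Finset.subset_univ _) _) hs, trivial⟩
    | n + 2, ih, T, hY, hW, _ =>
      obtain ⟨hb, e, he, hbe, hWe⟩ := hW w hwz'
      refine ⟨lt_of_le_of_lt (bdeg_mono G (Finset.subset_insert _ _) _) hb, ?_⟩
      have e1 : insert w (insert z Y) = insert z (insert w Y) := Finset.insert_comm _ _ _
      rw [e1] at he hbe hWe
      have e2 : insert e (insert z (insert w Y)) = insert z (insert e (insert w Y)) :=
        Finset.insert_comm _ _ _
      rw [e2] at hWe
      have hew : e ∉ insert w Y := fun h => he (Finset.mem_insert_of_mem h)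
      have hez : z ≠ e := fun h => he (by rw [h]; exact Finset.mem_insert_self _ _)
      refine ⟨e, hew, lt_of_le_of_lt (bdeg_mono G (Finset.subset_insert _ _) _) hbe, ?_⟩
      refine ih n (by omega) (fun k hk => T k (by omega)) _ ?_ ?_ hWe
      · rw [Finset.mem_insert, not_or]; exact ⟨hez, hzw⟩
      · exact card_compl_insert' (card_compl_insert' hY hw) hew

lemma tempo (s : ℕ) (n : ℕ) : ∀ X : Finset V, Xᶜ.card = n →
    WinG G s n false X → WinG G s n true X := by
  induction n using Nat.strong_induction_on with
  | _ n ih =>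
    intro X hX hW
    match n, ih, hX, hW with
    | 0, _, _, _ => trivial
    | 1, _, hX, hW =>
      obtain ⟨v, hv⟩ := exists_notMem' hX
      exact ⟨v, hv, (hW v hv).1, trivial⟩
    | n + 2, ih, hX, hW =>
      obtain ⟨z, hz, hs⟩ := safe_exists G s _ _ X hX hW
      obtain ⟨_, e, he, hbe, hWe⟩ := hW z hz
      have heX : e ∉ X := fun h => he (Finset.mem_insert_of_mem h)
      have hez : z ≠ e := fun h => he (by rw [h]; exact Finset.mem_insert_self _ _)
      refine ⟨e, heX, lt_of_le_of_lt (bdeg_mono G (Finset.subset_insert _ _) _) hbe, ?_⟩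
      rw [Finset.insert_comm] at hWe
      refine safe_drop G s n (fun k hk => ih k (by omega)) z hs _ ?_
        (card_compl_insert' hX heX) hWe
      rw [Finset.mem_insert, not_or]; exact ⟨hez, hz⟩

lemma before_append (σ : List V) (w u v : V) :
    (∃ i j : Fin (σ ++ [w]).length, i < j ∧ (σ ++ [w]).get i = u ∧ (σ ++ [w]).get j = v) ↔
    (∃ i j : Fin σ.length, i < j ∧ σ.get i = u ∧ σ.get j = v) ∨ (u ∈ σ ∧ v = w) := by
  constructor
  · rintro ⟨⟨i, hi⟩, ⟨j, hj⟩, hij, h1, h2⟩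
    simp only [Fin.mk_lt_mk, List.get_eq_getElem, List.length_append, List.length_singleton]
      at hij h1 h2 hi hj
    have hi' : i < σ.length := by omega
    rw [List.getElem_append_left hi'] at h1
    by_cases hj' : j < σ.length
    · rw [List.getElem_append_left hj'] at h2
      exact Or.inl ⟨⟨i, hi'⟩, ⟨j, hj'⟩, hij, h1, h2⟩
    · right
      rw [List.getElem_append_right (by omega)] at h2
      refine ⟨h1 ▸ List.getElem_mem hi', ?_⟩
      simpa using h2.symm
  · rintro (⟨⟨i, hi⟩, ⟨j, hj⟩, hij, h1, h2⟩ | ⟨hu, rfl⟩)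
    · refine ⟨⟨i, by simp; omega⟩, ⟨j, by simp; omega⟩, hij, ?_, ?_⟩
      · simp only [List.get_eq_getElem] at h1 ⊢
        rw [List.getElem_append_left hi]; exact h1
      · simp only [List.get_eq_getElem] at h2 ⊢
        rw [List.getElem_append_left hj]; exact h2
    · obtain ⟨i, hi, h⟩ := List.getElem_of_mem hu
      refine ⟨⟨i, by simp; omega⟩, ⟨σ.length, by simp⟩, hi, ?_, ?_⟩
      · simp only [List.get_eq_getElem]
        rw [List.getElem_append_left hi]; exact h
      · simp

lemma backDeg_append_self (σ : List V) (w : V) (hw : w ∉ σ) :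
    backDeg G (σ ++ [w]) w = bdeg G σ.toFinset w := by
  unfold backDeg bdeg
  congr 1
  apply Finset.filter_congr
  intro u _
  rw [before_append]
  have : ¬ ∃ i j : Fin σ.length, i < j ∧ σ.get i = u ∧ σ.get j = w := by
    rintro ⟨i, j, _, _, h⟩
    exact hw (h ▸ List.get_mem _ _)
  rw [List.mem_toFinset]
  exact ⟨fun h => ⟨h.1, h.2.elim (fun h' => absurd h' this) (fun h' => h'.1)⟩,
    fun h => ⟨h.1, Or.inr ⟨h.2, rfl⟩⟩⟩

lemma backDeg_append_of_mem (σ : List V) (w v : V) (hw : w ∉ σ) (hv : v ∈ σ) :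
    backDeg G (σ ++ [w]) v = backDeg G σ v := by
  unfold backDeg
  congr 1
  apply Finset.filter_congr
  intro u _
  rw [before_append]
  have : v ≠ w := fun h => hw (h ▸ hv)
  simp [this]

lemma toFinset_append' (σ : List V) (w : V) :
    (σ ++ [w]).toFinset = insert w σ.toFinset := by
  ext u; simp [or_comm]

lemma past_append (s : ℕ) (σ : List V) (w : V) (hw : w ∉ σ) :
    (∀ v ∈ σ ++ [w], 1 + backDeg G (σ ++ [w]) v ≤ s) ↔
    (∀ v ∈ σ, 1 + backDeg G σ v ≤ s) ∧ bdeg G σ.toFinset w < s := by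
  constructor
  · intro h
    refine ⟨fun v hv => ?_, ?_⟩
    · rw [← backDeg_append_of_mem G σ w v hw hv]; exact h v (by simp [hv])
    · have := h w (by simp)
      rw [backDeg_append_self G σ w hw] at this
      omega
  · rintro ⟨h1, h2⟩ v hv
    rcases List.mem_append.mp hv with hv | hv
    · rw [backDeg_append_of_mem G σ w v hw hv]; exact h1 v hv
    · have : v = w := by simpa using hv
      subst this
      rw [backDeg_append_self G σ v hw]; omega

lemma gameVal_le_iff (s : ℕ) (n : ℕ) : ∀ (a : Bool) (σ : List V), σ.toFinsetᶜ.card = n →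
    (gameVal G a σ ≤ s ↔ (∀ v ∈ σ, 1 + backDeg G σ v ≤ s) ∧ WinG G s n a σ.toFinset) := by
  induction n with
  | zero =>
    intro a σ hσ
    rw [Finset.card_eq_zero, Finset.compl_eq_empty_iff] at hσ
    have hm : ∀ v, v ∈ σ := fun v => by
      rw [← List.mem_toFinset, hσ]; exact Finset.mem_univ _
    rw [gameVal, dif_neg (by simp [hm])]
    simp [colOrd, WinG, Finset.sup_le_iff, hm]
  | succ n ih =>
    intro a σ hσ
    have hne : (Finset.univ.filter (fun v : V => v ∉ σ)).Nonempty := by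
      obtain ⟨v, hv⟩ := exists_notMem' hσ
      exact ⟨v, by simpa using hv⟩
    have step : ∀ b v, v ∉ σ → (gameVal G b (σ ++ [v]) ≤ s ↔
        ((∀ v ∈ σ, 1 + backDeg G σ v ≤ s) ∧ bdeg G σ.toFinset v < s) ∧
          WinG G s n b (insert v σ.toFinset)) := by
      intro b v hv
      rw [← past_append G s σ v hv, ← toFinset_append']
      apply ih
      rw [toFinset_append']
      exact card_compl_insert' hσ (by simpa using hv)
    rw [gameVal, dif_pos hne]
    cases a with
    | true =>
      simp only [if_true, Finset.inf'_le_iff, Finset.mem_attach, true_and, Subtype.exists,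
        Finset.mem_filter, Finset.mem_univ, WinG, List.mem_toFinset]
      constructor
      · rintro ⟨v, hv, h⟩
        rw [step _ v hv] at h
        exact ⟨h.1.1, v, hv, h.1.2, h.2⟩
      · rintro ⟨h1, v, hv, h2, h3⟩
        exact ⟨v, hv, (step _ v hv).mpr ⟨⟨h1, h2⟩, h3⟩⟩
    | false =>
      simp only [Bool.false_eq_true, if_false, Finset.sup'_le_iff, Finset.mem_attach,
        forall_true_left, Subtype.forall,
        Finset.mem_filter, Finset.mem_univ, true_and, WinG, List.mem_toFinset]
      constructor
      · intro h
        refine ⟨?_, fun v hv => ?_⟩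
        · obtain ⟨v, hv⟩ := hne
          have hv : v ∉ σ := by simpa using hv
          exact ((step _ v hv).mp (h v hv)).1.1
        · have := (step _ v hv).mp (h v hv)
          exact ⟨this.1.2, this.2⟩
      · rintro ⟨h1, h2⟩ v hv
        exact (step _ v hv).mpr ⟨⟨h1, (h2 v hv).1⟩, (h2 v hv).2⟩

lemma gcol_le_iff (s : ℕ) :
    gcol G ≤ s ↔ WinG G s (Fintype.card V) true ∅ := by
  rw [gcol, gameVal_le_iff G s (Fintype.card V) true [] (by simp)]
  simp

/-- The image of a set of vertices of `G - x`. -/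
noncomputable def lift' (x : V) (X : Finset ({x}ᶜ : Set V)) : Finset V :=
  X.map (Function.Embedding.subtype _)

lemma lift_insert (x : V) [DecidableEq ({x}ᶜ : Set V)] (X : Finset ({x}ᶜ : Set V)) (v : ({x}ᶜ : Set V)) :
    lift' x (insert v X) = insert v.1 (lift' x X) := by
  simp [lift']

lemma mem_lift (x : V) (X : Finset ({x}ᶜ : Set V)) (v : ({x}ᶜ : Set V)) :
    v.1 ∈ lift' x X ↔ v ∈ X := by
  unfold lift'
  exact Finset.mem_map' (Function.Embedding.subtype (· ∈ ({x}ᶜ : Set V)))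

lemma notMem_lift (x : V) (X : Finset ({x}ᶜ : Set V)) : x ∉ lift' x X := by
  simp [lift']

lemma bdeg_lift (x : V) [Fintype ({x}ᶜ : Set V)] (X : Finset ({x}ᶜ : Set V))
    (v : ({x}ᶜ : Set V)) :
    bdeg G (lift' x X) v.1 ≤ bdeg (G.induce ({x}ᶜ : Set V)) X v := by
  unfold bdeg
  rw [← Finset.card_map (Function.Embedding.subtype (· ∈ ({x}ᶜ : Set V)))]
  apply Finset.card_le_card
  intro u hu
  simp only [Finset.mem_filter, Finset.mem_univ, true_and] at hu
  have hux : u ∈ ({x}ᶜ : Set V) := fun h => notMem_lift x X (by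
    have h : u = x := h
    exact h ▸ hu.2)
  rw [Finset.mem_map]
  refine ⟨⟨u, hux⟩, ?_, rfl⟩
  simp only [Finset.mem_filter, Finset.mem_univ, true_and]
  exact ⟨hu.1, (mem_lift x X ⟨u, hux⟩).mp hu.2⟩

lemma bdeg_insert_le (X : Finset V) (x v : V) : bdeg G (insert x X) v ≤ bdeg G X v + 1 := by
  unfold bdeg
  refine le_trans (Finset.card_le_card ?_) (Finset.card_insert_le x _)
  intro u hu
  simp only [Finset.mem_filter, Finset.mem_univ, true_and, Finset.mem_insert] at hu ⊢
  tauto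

lemma win_with (x : V) [Fintype ({x}ᶜ : Set V)] (t n : ℕ) :
    ∀ (a : Bool) (X : Finset ({x}ᶜ : Set V)),
      WinG (G.induce ({x}ᶜ : Set V)) t n a X →
      WinG G (t + 1) n a (insert x (lift' x X)) := by
  induction n with
  | zero => intro a X _; simp [WinG]
  | succ n ih =>
    intro a X hW
    have hb : ∀ v : ({x}ᶜ : Set V), bdeg (G.induce ({x}ᶜ : Set V)) X v < t →
        bdeg G (insert x (lift' x X)) v.1 < t + 1 := fun v hv => by
      have h1 := bdeg_insert_le G (lift' x X) x v.1
      have h2 := bdeg_lift G x X v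
      omega
    cases a with
    | true =>
      obtain ⟨v, hv, hbv, h⟩ := hW
      refine ⟨v.1, ?_, hb v hbv, ?_⟩
      · rw [Finset.mem_insert, mem_lift, not_or]; exact ⟨v.2, hv⟩
      · have := ih _ _ h
        rw [lift_insert, Finset.insert_comm] at this
        exact this
    | false =>
      intro v hv
      rw [Finset.mem_insert, not_or] at hv
      have hvc : v ∈ ({x}ᶜ : Set V) := hv.1
      have hv' := (mem_lift x X ⟨v, hvc⟩).not.mp hv.2
      obtain ⟨hbv, h⟩ := hW ⟨v, hvc⟩ hv'
      refine ⟨hb _ hbv, ?_⟩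
      have := ih _ _ h
      rw [lift_insert, Finset.insert_comm] at this
      exact this

lemma win_without (x : V) [Fintype ({x}ᶜ : Set V)] (t : ℕ)
    (hd : bdeg G Finset.univ x < t + 1) (n : ℕ) :
    ∀ (a : Bool) (X : Finset ({x}ᶜ : Set V)), (lift' x X)ᶜ.card = n + 1 →
      WinG (G.induce ({x}ᶜ : Set V)) t n a X →
      WinG G (t + 1) (n + 1) a (lift' x X) := by
  have hdx : ∀ X, bdeg G X x < t + 1 := fun X =>
    lt_of_le_of_lt (bdeg_mono G (Finset.subset_univ _) _) hd
  induction n with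
  | zero =>
    intro a X hX _
    cases a with
    | true => exact ⟨x, notMem_lift x X, hdx _, trivial⟩
    | false =>
      intro v hv
      by_cases hvx : v = x
      · subst hvx; exact ⟨hdx _, trivial⟩
      · have := card_compl_insert' hX (notMem_lift x X)
        rw [Finset.card_eq_zero, Finset.compl_eq_empty_iff] at this
        have h2 := Finset.mem_univ v
        rw [← this, Finset.mem_insert] at h2
        tauto
  | succ n ih =>
    intro a X hX hW
    have hb : ∀ v : ({x}ᶜ : Set V), bdeg (G.induce ({x}ᶜ : Set V)) X v < t →
        bdeg G (lift' x X) v.1 < t + 1 := fun v hv => by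
      have h2 := bdeg_lift G x X v
      omega
    cases a with
    | true =>
      obtain ⟨v, hv, hbv, h⟩ := hW
      have hv' := (mem_lift x X v).not.mpr hv
      refine ⟨v.1, hv', hb v hbv, ?_⟩
      have := ih _ _ (by rw [lift_insert]; exact card_compl_insert' hX hv') h
      rw [lift_insert] at this
      exact this
    | false =>
      intro v hv
      by_cases hvx : v = x
      · subst hvx
        exact ⟨hdx _, tempo G (t + 1) (n + 1) _ (card_compl_insert' hX hv)
          (win_with G v t (n + 1) false X hW)⟩
      · have hvc : v ∈ ({x}ᶜ : Set V) := hvx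
        have hv' := (mem_lift x X ⟨v, hvc⟩).not.mp hv
        obtain ⟨hbv, h⟩ := hW ⟨v, hvc⟩ hv'
        refine ⟨hb _ hbv, ?_⟩
        have := ih _ _ (by rw [lift_insert]; exact card_compl_insert' hX hv) h
        rw [lift_insert] at this
        exact this

end helpers

/-- If `d_G(x) ≤ gcol(G − x)`, then
`gcol(G) ≤ gcol(G − x) + 1`. -/
theorem gcol_le_of_degree_le {V : Type*} [Fintype V] (G : SimpleGraph V)
    (x : V) (hd : (G.neighborSet x).ncard ≤ gcol (G.induce ({x}ᶜ : Set V))) :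
    gcol G ≤ gcol (G.induce ({x}ᶜ : Set V)) + 1 := by
  rw [gcol_le_iff]
  have h := (gcol_le_iff (G.induce ({x}ᶜ : Set V)) _).mp le_rfl
  have hc : Fintype.card V = Fintype.card ({x}ᶜ : Set V) + 1 := by
    have h1 := Fintype.card_compl_set ({x} : Set V)
    have h2 : 0 < Fintype.card V := Fintype.card_pos_iff.mpr ⟨x⟩
    rw [Set.card_singleton] at h1
    omega
  have hx : bdeg G Finset.univ x < gcol (G.induce ({x}ᶜ : Set V)) + 1 := by
    have : bdeg G Finset.univ x = (G.neighborSet x).ncard := by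
      rw [bdeg, ← Set.ncard_coe_finset]
      congr 1
      ext u; simp
    omega
  rw [hc]
  have e : (∅ : Finset V) = lift' x ∅ := by simp [lift']
  have := win_without G x _ hx _ true ∅ (by rw [← e]; simpa using hc) h
  rw [← e] at this
  exact this
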